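/- arXiv:2405.13556 — 2 statements merged into one kernel-verified Lean document; each statement's English description precedes it below -/
import Mathlib

section
/- (Rothblum index theorem) Let B be a Metzler matrix. Then the spectral abscissa ζ(B) is an eigenvalue of B whose index equals the length of the longest chain of classes of B, where the length of a chain is the number of basic classes it contains. -/
open Matrix
open scoped Classical

/-- The spectral abscissa of a real square matrix. -/
noncomputable def specAbs {n : Type*} [Fintype n] [DecidableEq n]
    (A : Matrix n n ℝ) : ℝ :=
  sSup (Complex.re '' spectrum ℂ (A.map (algebraMap ℝ ℂ)))

variable {N : ℕ}

/-- The directed edge relation of the nonzero off-diagonal entries of `B`. -/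
def edgeRel (B : Matrix (Fin N) (Fin N) ℝ) (i j : Fin N) : Prop := i ≠ j ∧ B i j ≠ 0

/-- Vertex `i` has access to vertex `j`. -/
def access (B : Matrix (Fin N) (Fin N) ℝ) : Fin N → Fin N → Prop :=
  Relation.ReflTransGen (edgeRel B)

/-- A class of `B`: an equivalence class of the communication relation, i.e. the vertex
set of a strongly connected component of the directed graph of `B`. -/
def IsClass (B : Matrix (Fin N) (Fin N) ℝ) (γ : Set (Fin N)) : Prop :=
  ∃ m : Fin N, γ = {n' : Fin N | access B m n' ∧ access B n' m}

/-- Class `γ` has access to class `δ`. -/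
def classAccess (B : Matrix (Fin N) (Fin N) ℝ) (γ δ : Set (Fin N)) : Prop :=
  ∃ m ∈ γ, ∃ n' ∈ δ, access B m n'

/-- A chain of classes of `B`: a list of classes, strictly increasing in the access
order. -/
def IsClassChain (B : Matrix (Fin N) (Fin N) ℝ) (l : List (Set (Fin N))) : Prop :=
  (∀ γ ∈ l, IsClass B γ) ∧ l.Chain' (fun γ δ => classAccess B γ δ ∧ γ ≠ δ)

/-- The principal submatrix of `B` on the index set `γ`. -/
def subMat (B : Matrix (Fin N) (Fin N) ℝ) (γ : Set (Fin N)) : Matrix γ γ ℝ :=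
  fun a b => B a.1 b.1

/-- A class `γ` of `B` is basic if `ζ(B_{γ,γ}) = ζ(B)`. -/
def IsBasic (B : Matrix (Fin N) (Fin N) ℝ) (γ : Set (Fin N)) : Prop :=
  specAbs (subMat B γ) = specAbs B

/-- The length of a chain of classes: the number of basic classes it contains. -/
noncomputable def chainLen (B : Matrix (Fin N) (Fin N) ℝ) (l : List (Set (Fin N))) : ℕ :=
  l.countP (fun γ => decide (IsBasic B γ))

section generic
variable {ι : Type*} [Fintype ι] [DecidableEq ι]

/-- Off-diagonal nonnegativity. -/
def Metz (M : Matrix ι ι ℝ) : Prop := ∀ i j, i ≠ j → 0 ≤ M i j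

/-- Strict positive supersolution. -/
def PP (M : Matrix ι ι ℝ) (s : ℝ) : Prop :=
  ∃ u : ι → ℝ, (∀ i, 0 < u i) ∧ ∀ i, (M *ᵥ u) i < s * u i

lemma mulVec_split (M : Matrix ι ι ℝ) (u : ι → ℝ) (i : ι) :
    (M *ᵥ u) i = M i i * u i + ∑ j ∈ Finset.univ.erase i, M i j * u j := by
  simp only [Matrix.mulVec, dotProduct]
  rw [← Finset.add_sum_erase _ _ (Finset.mem_univ i)]

lemma offsum_nonneg {M : Matrix ι ι ℝ} (hM : Metz M) {u : ι → ℝ} (hu : ∀ i, 0 ≤ u i) (i : ι) :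
    0 ≤ ∑ j ∈ Finset.univ.erase i, M i j * u j :=
  Finset.sum_nonneg fun j hj => mul_nonneg (hM i j (Finset.ne_of_mem_erase hj).symm) (hu j)

lemma PP.mono_vec {M : Matrix ι ι ℝ} (hM : Metz M) {s : ℝ} (h : PP M s) {x : ι → ℝ}
    (hx : ∀ i, (M *ᵥ x) i ≤ s * x i) : ∀ i, 0 ≤ x i := by
  obtain ⟨u, hu, hMu⟩ := h
  intro i
  by_contra hneg
  push Not at hneg
  have : Nonempty ι := ⟨i⟩
  obtain ⟨k, hk⟩ := Finite.exists_min (fun j => x j / u j)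
  set t := x k / u k with ht
  have htneg : t < 0 := lt_of_le_of_lt (hk i) (div_neg_of_neg_of_pos hneg (hu i))
  have hy : ∀ j, 0 ≤ (x - t • u) j := by
    intro j
    have := hk j
    rw [le_div_iff₀ (hu j)] at this
    simp; linarith
  have hyk : (x - t • u) k = 0 := by
    have := (hu k).ne'
    simp [ht]; field_simp; simp
  have h1 := offsum_nonneg hM hy k
  have h2 := mulVec_split M (x - t • u) k
  rw [hyk, mul_zero, zero_add] at h2
  rw [← h2, Matrix.mulVec_sub, Matrix.mulVec_smul] at h1
  simp at h1 hyk
  have h3 := hx k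
  have h4 := mul_lt_mul_of_neg_left (hMu k) htneg
  have : x k = t * u k := by linarith
  rw [this] at h3
  nlinarith

lemma PP.mono {M : Matrix ι ι ℝ} {s s' : ℝ} (h : PP M s) (hs : s ≤ s') : PP M s' := by
  obtain ⟨u, hu, hMu⟩ := h
  exact ⟨u, hu, fun i => (hMu i).trans_le (mul_le_mul_of_nonneg_right hs (hu i).le)⟩

lemma PP.exists (M : Matrix ι ι ℝ) : ∃ s, PP M s := by
  refine ⟨1 + ∑ i, ∑ j, |M i j|, fun _ => 1, fun _ => one_pos, fun i => ?_⟩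
  simp only [Matrix.mulVec, dotProduct, mul_one]
  have h1 : ∑ j, M i j ≤ ∑ j, |M i j| := Finset.sum_le_sum fun j _ => le_abs_self _
  have h2 : ∑ j, |M i j| ≤ ∑ i, ∑ j, |M i j| :=
    Finset.single_le_sum (f := fun i => ∑ j, |M i j|)
      (fun i _ => Finset.sum_nonneg fun j _ => abs_nonneg _) (Finset.mem_univ i)
  linarith

lemma PP.open' {M : Matrix ι ι ℝ} {s : ℝ} (h : PP M s) : ∃ s' < s, PP M s' := by
  obtain ⟨u, hu, hMu⟩ := h
  have : ∀ᶠ s' in nhds s, ∀ i, (M *ᵥ u) i < s' * u i := by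
    rw [Filter.eventually_all]
    intro i
    exact ContinuousAt.eventually_lt (f := fun _ => (M *ᵥ u) i) (g := fun s' => s' * u i)
      continuousAt_const (by fun_prop) (hMu i)
  have h2 : ∀ᶠ s' in nhdsWithin s (Set.Iio s), ∀ i, (M *ᵥ u) i < s' * u i :=
    this.filter_mono nhdsWithin_le_nhds
  obtain ⟨s', h3, h4⟩ := (h2.and self_mem_nhdsWithin).exists
  exact ⟨s', h4, u, hu, h3⟩

lemma PP.diag_lt {M : Matrix ι ι ℝ} (hM : Metz M) {s : ℝ} (h : PP M s) (i : ι) : M i i < s := by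
  obtain ⟨u, hu, hMu⟩ := h
  have h1 := offsum_nonneg hM (fun i => (hu i).le) i
  have h2 := hMu i
  rw [mulVec_split] at h2
  by_contra h3
  push Not at h3
  nlinarith [hu i]

lemma sub_mulVec_apply (M : Matrix ι ι ℝ) (s : ℝ) (x : ι → ℝ) (i : ι) :
    ((s • (1 : Matrix ι ι ℝ) - M) *ᵥ x) i = s * x i - (M *ᵥ x) i := by
  simp [Matrix.sub_mulVec, Matrix.smul_mulVec]

lemma PP.det_ne {M : Matrix ι ι ℝ} (hM : Metz M) {s : ℝ} (h : PP M s) :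
    (s • (1 : Matrix ι ι ℝ) - M).det ≠ 0 := by
  intro h0
  obtain ⟨x, hx, hx0⟩ := Matrix.exists_mulVec_eq_zero_iff.2 h0
  have e : ∀ i, (M *ᵥ x) i = s * x i := fun i => by
    have := congrFun hx0 i
    rw [sub_mulVec_apply] at this
    simp at this; linarith
  apply hx
  have h1 := h.mono_vec hM (fun i => (e i).le)
  have h2 := h.mono_vec hM (x := -x) (fun i => by
    have := e i
    simp [Matrix.mulVec_neg, this])
  ext i
  have := h1 i
  have := h2 i
  simp at *
  linarith

lemma sol_adj (M : Matrix ι ι ℝ) (s : ℝ) (i : ι) :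
    s * ((s • (1 : Matrix ι ι ℝ) - M).adjugate *ᵥ 1) i
      - (M *ᵥ ((s • (1 : Matrix ι ι ℝ) - M).adjugate *ᵥ 1)) i
      = (s • (1 : Matrix ι ι ℝ) - M).det := by
  rw [← sub_mulVec_apply, Matrix.mulVec_mulVec, Matrix.mul_adjugate]
  simp [Matrix.smul_mulVec]

lemma sol_exists {M : Matrix ι ι ℝ} {s : ℝ}
    (h : (s • (1 : Matrix ι ι ℝ) - M).det ≠ 0) :
    ∀ i, s * (((s • (1 : Matrix ι ι ℝ) - M).det)⁻¹ • (s • (1 : Matrix ι ι ℝ) - M).adjugate *ᵥ 1) i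
      - (M *ᵥ (((s • (1 : Matrix ι ι ℝ) - M).det)⁻¹ • (s • (1 : Matrix ι ι ℝ) - M).adjugate *ᵥ 1)) i = 1 := by
  intro i
  have := sol_adj M s i
  rw [Matrix.mulVec_smul]
  simp only [Pi.smul_apply, smul_eq_mul]
  rw [mul_left_comm, ← mul_sub, this, inv_mul_cancel₀ h]

lemma PP.sol {M : Matrix ι ι ℝ} (hM : Metz M) {s : ℝ} (h : PP M s) :
    ∃ u : ι → ℝ, (∀ i, 0 ≤ u i) ∧ ∀ i, s * u i - (M *ᵥ u) i = 1 := by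
  refine ⟨_, ?_, sol_exists (h.det_ne hM)⟩
  apply h.mono_vec hM
  intro i
  have := sol_exists (h.det_ne hM) i
  linarith

lemma exists_abscissa [Nonempty ι] {M : Matrix ι ι ℝ} (hM : Metz M) :
    ∃ s0 : ℝ, (∀ s, PP M s ↔ s0 < s) ∧ (s0 • (1 : Matrix ι ι ℝ) - M).det = 0 := by
  have hne : {s | PP M s}.Nonempty := PP.exists M
  obtain ⟨i0⟩ := ‹Nonempty ι›
  have hbd : BddBelow {s | PP M s} := ⟨M i0 i0, fun s hs => (PP.diag_lt hM hs i0).le⟩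
  set s0 := sInf {s | PP M s} with hs0
  have hiff : ∀ s, PP M s ↔ s0 < s := by
    intro s
    constructor
    · intro h
      obtain ⟨s', h1, h2⟩ := h.open'
      exact (csInf_le hbd h2).trans_lt h1
    · intro h
      obtain ⟨s', h1, h2⟩ := exists_lt_of_csInf_lt hne h
      exact PP.mono h1 h2.le
  refine ⟨s0, hiff, ?_⟩
  by_contra hdet
  have hpos : ∀ i, 0 ≤ (s0 • (1 : Matrix ι ι ℝ) - M).det
      * ((s0 • (1 : Matrix ι ι ℝ) - M).adjugate *ᵥ 1) i := by
    intro i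
    have hc : Continuous fun s : ℝ => (s • (1 : Matrix ι ι ℝ) - M).det
      * ((s • (1 : Matrix ι ι ℝ) - M).adjugate *ᵥ 1) i := by
      have h1 : Continuous fun s : ℝ => (s • (1 : Matrix ι ι ℝ) - M) := by fun_prop
      have h2 := h1.matrix_adjugate
      have h3 := h1.matrix_det
      have h4 : Continuous fun s : ℝ => ((s • (1 : Matrix ι ι ℝ) - M).adjugate *ᵥ (1 : ι → ℝ)) :=
        h2.matrix_mulVec continuous_const
      exact h3.mul ((continuous_apply i).comp h4)
    refine ge_of_tendsto ((hc.continuousAt (x := s0)).tendsto.mono_left (nhdsWithin_le_nhds (s := Set.Ioi s0))) ?_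
    filter_upwards [self_mem_nhdsWithin] with s hs
    have hP := (hiff s).2 hs
    have hd := hP.det_ne hM
    have := hP.mono_vec hM
      (x := (((s • (1 : Matrix ι ι ℝ) - M).det)⁻¹ • (s • (1 : Matrix ι ι ℝ) - M).adjugate *ᵥ 1))
      (fun i => by
        have := sol_exists hd i
        linarith) i
    simp only [Pi.smul_apply, smul_eq_mul] at this
    have h2 := mul_nonneg this (sq_nonneg (s • (1 : Matrix ι ι ℝ) - M).det)
    field_simp at h2
    linarith
  have hsol := sol_exists hdet
  set u := (((s0 • (1 : Matrix ι ι ℝ) - M).det)⁻¹ • (s0 • (1 : Matrix ι ι ℝ) - M).adjugate *ᵥ 1)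
    with hu
  have hu0 : ∀ i, 0 ≤ u i := by
    intro i
    have h2 := mul_nonneg (hpos i) (sq_nonneg (s0 • (1 : Matrix ι ι ℝ) - M).det⁻¹)
    have e : u i = (s0 • (1 : Matrix ι ι ℝ) - M).det
      * ((s0 • (1 : Matrix ι ι ℝ) - M).adjugate *ᵥ 1) i * (s0 • (1 : Matrix ι ι ℝ) - M).det⁻¹ ^ 2 := by
      simp only [hu, Pi.smul_apply, smul_eq_mul]
      field_simp
    rw [e]; exact h2
  have hP : PP M s0 := by
    refine ⟨u, fun i => lt_of_le_of_ne (hu0 i) ?_, fun i => by have := hsol i; linarith⟩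
    intro h0
    have h1 := hsol i
    rw [mulVec_split, ← h0] at h1
    have := offsum_nonneg hM hu0 i
    linarith
  exact lt_irrefl _ ((hiff s0).1 hP)

lemma complex_not_PP {M : Matrix ι ι ℝ} (hM : Metz M) {l : ℂ}
    (hl : l ∈ spectrum ℂ (M.map (algebraMap ℝ ℂ))) : ¬ PP M l.re := by
  intro hP
  rw [spectrum.mem_iff, Matrix.isUnit_iff_isUnit_det, isUnit_iff_ne_zero, not_not] at hl
  obtain ⟨z, hz, hz0⟩ := Matrix.exists_mulVec_eq_zero_iff.2 hl
  have e : ∀ i, (l - M i i) * z i = ∑ j ∈ Finset.univ.erase i, (M i j : ℂ) * z j := by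
    intro i
    have h1 := congrFun hz0 i
    rw [Matrix.sub_mulVec, Algebra.algebraMap_eq_smul_one, Matrix.smul_mulVec] at h1
    simp only [Matrix.one_mulVec, Pi.sub_apply, Pi.smul_apply, smul_eq_mul, Matrix.mulVec,
      dotProduct, Pi.zero_apply, Matrix.map_apply] at h1
    rw [← Finset.add_sum_erase _ _ (Finset.mem_univ i)] at h1
    simp only [Complex.coe_algebraMap] at h1
    linear_combination h1
  have h1 : ∀ i, 0 ≤ (fun i => -‖z i‖) i := by
    apply hP.mono_vec hM
    intro i
    rw [mulVec_split]
    have h2 := congrArg norm (e i)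
    rw [norm_mul] at h2
    have h3 : ‖∑ j ∈ Finset.univ.erase i, (M i j : ℂ) * z j‖ ≤
        ∑ j ∈ Finset.univ.erase i, M i j * ‖z j‖ := by
      refine (norm_sum_le _ _).trans (Finset.sum_le_sum fun j hj => ?_)
      rw [norm_mul, Complex.norm_real, Real.norm_of_nonneg (hM i j (Finset.ne_of_mem_erase hj).symm)]
    have h4 : l.re - M i i ≤ ‖l - M i i‖ := by
      have := Complex.re_le_norm (l - M i i)
      simpa using this
    have h5 := mul_le_mul_of_nonneg_right h4 (norm_nonneg (z i))
    simp only [mul_neg, Finset.sum_neg_distrib]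
    linarith
  apply hz
  ext i
  have := h1 i
  simp only [Left.nonneg_neg_iff] at this
  simpa using this

lemma specAbs_spec [Nonempty ι] {M : Matrix ι ι ℝ} (hM : Metz M) :
    (∀ s, PP M s ↔ specAbs M < s) ∧ (specAbs M • (1 : Matrix ι ι ℝ) - M).det = 0 := by
  obtain ⟨s0, h1, h2⟩ := exists_abscissa hM
  have : specAbs M = s0 := by
    apply IsGreatest.csSup_eq
    constructor
    · refine ⟨(s0 : ℂ), ?_, by simp⟩
      rw [spectrum.mem_iff, Matrix.isUnit_iff_isUnit_det, isUnit_iff_ne_zero, not_not]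
      have := RingHom.map_det (algebraMap ℝ ℂ) (s0 • (1 : Matrix ι ι ℝ) - M)
      rw [h2, map_zero] at this
      rw [this]
      congr 1
      ext i j
      simp [Algebra.algebraMap_eq_smul_one, Matrix.one_apply]
      split_ifs <;> simp
    · rintro _ ⟨l, hl, rfl⟩
      by_contra h
      push Not at h
      exact complex_not_PP hM hl ((h1 _).2 h)
  rw [this]; exact ⟨h1, h2⟩

lemma compare_edge {M : Matrix ι ι ℝ} (hM : Metz M) (a : ℝ) {i j : ι} (hij : i ≠ j)
    (h : M i j ≠ 0) : ∃ c > 0, ∀ s ≤ a, ∀ u : ι → ℝ, (∀ i, 0 ≤ u i) →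
      (∀ i, (M *ᵥ u) i ≤ s * u i) → c * u j ≤ u i := by
  have hp : 0 < M i j := lt_of_le_of_ne (hM i j hij) h.symm
  have hk : 0 < |a| + |M i i| + 1 := by positivity
  refine ⟨M i j / (|a| + |M i i| + 1), by positivity, fun s hs u hu hMu => ?_⟩
  rw [div_mul_eq_mul_div, div_le_iff₀ hk]
  have h1 := hMu i
  rw [mulVec_split] at h1
  have h2 : M i j * u j ≤ ∑ j ∈ Finset.univ.erase i, M i j * u j :=
    Finset.single_le_sum (f := fun j => M i j * u j)
      (fun j hj => mul_nonneg (hM i j (Finset.ne_of_mem_erase hj).symm) (hu j))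
      (by simp [hij.symm])
  have h3 : s - M i i ≤ |a| + |M i i| + 1 := by
    have := le_abs_self a
    have := neg_abs_le (M i i)
    linarith
  have := mul_le_mul_of_nonneg_right h3 (hu i)
  linarith

lemma compare_access {M : Matrix ι ι ℝ} (hM : Metz M) (a : ℝ) {i j : ι}
    (h : Relation.ReflTransGen (fun i j => i ≠ j ∧ M i j ≠ 0) i j) :
    ∃ c > 0, ∀ s ≤ a, ∀ u : ι → ℝ, (∀ i, 0 ≤ u i) →
      (∀ i, (M *ᵥ u) i ≤ s * u i) → c * u j ≤ u i := by
  induction h using Relation.ReflTransGen.head_induction_on with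
  | refl => exact ⟨1, one_pos, fun s _ u _ _ => by simp⟩
  | head h _ ih =>
    obtain ⟨c1, hc1, h1⟩ := ih
    obtain ⟨c2, hc2, h2⟩ := compare_edge hM a h.1 h.2
    refine ⟨c2 * c1, by positivity, fun s hs u hu hMu => ?_⟩
    have := h1 s hs u hu hMu
    have := h2 s hs u hu hMu
    nlinarith

lemma vecMul_split (M : Matrix ι ι ℝ) (u : ι → ℝ) (i : ι) :
    (u ᵥ* M) i = u i * M i i + ∑ j ∈ Finset.univ.erase i, u j * M j i := by
  simp only [Matrix.vecMul, dotProduct]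
  rw [← Finset.add_sum_erase _ _ (Finset.mem_univ i)]

lemma exists_left_pos [Nonempty ι] {M : Matrix ι ι ℝ} (hM : Metz M)
    (hirr : ∀ i j, Relation.ReflTransGen (fun i j => i ≠ j ∧ M i j ≠ 0) i j) :
    ∃ w : ι → ℝ, (∀ i, 0 < w i) ∧ ∀ j, (w ᵥ* M) j = specAbs M * w j := by
  obtain ⟨hPP, hdet⟩ := specAbs_spec hM
  set z0 := specAbs M with hz0
  obtain ⟨z, hz, hzM⟩ := Matrix.exists_vecMul_eq_zero_iff.2 hdet
  set w : ι → ℝ := fun i => |z i| with hw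
  have hw0 : ∀ i, 0 ≤ w i := fun i => abs_nonneg _
  have hq : ∀ j, 0 ≤ (w ᵥ* M) j - z0 * w j := by
    intro j
    have h1 := congrFun hzM j
    rw [Matrix.vecMul_sub, Matrix.vecMul_smul, Matrix.vecMul_one, Pi.sub_apply, vecMul_split] at h1
    simp only [Pi.smul_apply, smul_eq_mul, Pi.zero_apply] at h1
    have h2 : (z0 - M j j) * z j = ∑ i ∈ Finset.univ.erase j, z i * M i j := by linarith
    have h3 : |∑ i ∈ Finset.univ.erase j, z i * M i j| ≤ ∑ i ∈ Finset.univ.erase j, w i * M i j := by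
      refine (Finset.abs_sum_le_sum_abs _ _).trans (Finset.sum_le_sum fun i hi => ?_)
      rw [abs_mul, abs_of_nonneg (hM i j (Finset.ne_of_mem_erase hi))]
    rw [← h2, abs_mul] at h3
    have h4 := mul_le_mul_of_nonneg_right (le_abs_self (z0 - M j j)) (hw0 j)
    rw [vecMul_split]
    have : |z j| = w j := rfl
    rw [this] at h3
    linarith
  have heq : ∀ j, (w ᵥ* M) j = z0 * w j := by
    intro j
    by_contra hne
    have hqj : 0 < (w ᵥ* M) j - z0 * w j := lt_of_le_of_ne (hq j) (fun h => hne (by linarith))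
    choose c hc hcu using fun i => compare_access hM (z0 + 1) (hirr j i)
    set K := ∑ i, w i * (c i)⁻¹ with hK
    have hK0 : 0 ≤ K := Finset.sum_nonneg fun i _ => mul_nonneg (hw0 i) (inv_nonneg.2 (hc i).le)
    have key : ∀ t, 0 < t → t ≤ 1 → (w ᵥ* M) j - z0 * w j ≤ t * K := by
      intro t ht ht1
      obtain ⟨u, hu, hMu⟩ := (hPP (z0 + t)).2 (by linarith)
      have h1 : ∑ i, ((w ᵥ* M) i - z0 * w i) * u i ≤ t * ∑ i, w i * u i := by
        have e : ∑ i, (w ᵥ* M) i * u i = ∑ i, w i * (M *ᵥ u) i :=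
          (Matrix.dotProduct_mulVec w M u).symm
        have : ∑ i, w i * (M *ᵥ u) i ≤ ∑ i, w i * ((z0 + t) * u i) :=
          Finset.sum_le_sum fun i _ => mul_le_mul_of_nonneg_left (hMu i).le (hw0 i)
        simp only [sub_mul, Finset.sum_sub_distrib]
        rw [e, Finset.mul_sum]
        rw [sub_le_iff_le_add, ← Finset.sum_add_distrib]
        refine this.trans (Finset.sum_le_sum fun i _ => ?_)
        linarith
      have h2 : ((w ᵥ* M) j - z0 * w j) * u j ≤ ∑ i, ((w ᵥ* M) i - z0 * w i) * u i :=
        Finset.single_le_sum (f := fun i => ((w ᵥ* M) i - z0 * w i) * u i)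
          (fun i _ => mul_nonneg (hq i) (hu i).le) (Finset.mem_univ j)
      have h3 : ∑ i, w i * u i ≤ K * u j := by
        rw [hK, Finset.sum_mul]
        refine Finset.sum_le_sum fun i _ => ?_
        have := hcu i (z0 + t) (by linarith) u (fun i => (hu i).le) (fun i => (hMu i).le)
        rw [mul_assoc]
        refine mul_le_mul_of_nonneg_left ?_ (hw0 i)
        rw [le_inv_mul_iff₀ (hc i)]
        exact this
      have h4 := mul_le_mul_of_nonneg_left h3 ht.le
      have h5 : ((w ᵥ* M) j - z0 * w j) * u j ≤ (t * K) * u j := by linarith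
      exact le_of_mul_le_mul_right h5 (hu j)
    set q := (w ᵥ* M) j - z0 * w j
    have := key (min 1 (q / (2 * (K + 1)))) (by positivity) (min_le_left _ _)
    have h2 : min 1 (q / (2 * (K + 1))) * K ≤ q / (2 * (K + 1)) * K :=
      mul_le_mul_of_nonneg_right (min_le_right _ _) hK0
    have h3 : q / (2 * (K + 1)) * K ≤ q / 2 := by
      rw [div_mul_eq_mul_div, div_le_div_iff₀ (by positivity) (by positivity)]
      nlinarith
    linarith
  refine ⟨w, ?_, heq⟩
  have hex : ∃ i, z i ≠ 0 := by
    by_contra h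
    push Not at h
    exact hz (funext h)
  obtain ⟨i, hi⟩ := hex
  intro j
  have hij := hirr i j
  induction hij with
  | refl => exact abs_pos.2 hi
  | @tail b c _ h ih =>
    refine lt_of_le_of_ne (hw0 c) fun h0 => ?_
    have h1 := heq c
    rw [vecMul_split, ← h0] at h1
    have h2 : w b * M b c ≤ ∑ j ∈ Finset.univ.erase c, w j * M j c :=
      Finset.single_le_sum (f := fun j => w j * M j c)
        (fun j hj => mul_nonneg (hw0 j) (hM j c (Finset.ne_of_mem_erase hj)))
        (by simp [h.1])
    have h3 : 0 < M b c := lt_of_le_of_ne (hM b c h.1) h.2.symm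
    have := mul_pos ih h3
    linarith

end generic

lemma class_access {B : Matrix (Fin N) (Fin N) ℝ} {γ : Set (Fin N)} (hγ : IsClass B γ)
    {i j : Fin N} (hi : i ∈ γ) (hj : j ∈ γ) : access B i j := by
  obtain ⟨m, rfl⟩ := hγ
  exact hi.2.trans hj.1

lemma class_mem {B : Matrix (Fin N) (Fin N) ℝ} {γ : Set (Fin N)} (hγ : IsClass B γ)
    {i j : Fin N} (hi : i ∈ γ) (h1 : access B i j) (h2 : access B j i) : j ∈ γ := by
  obtain ⟨m, rfl⟩ := hγ
  exact ⟨hi.1.trans h1, h2.trans hi.2⟩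

lemma class_nonempty {B : Matrix (Fin N) (Fin N) ℝ} {γ : Set (Fin N)} (hγ : IsClass B γ) :
    Nonempty γ := by
  obtain ⟨m, rfl⟩ := hγ
  exact ⟨⟨m, Relation.ReflTransGen.refl, Relation.ReflTransGen.refl⟩⟩

lemma class_irr {B : Matrix (Fin N) (Fin N) ℝ} {γ : Set (Fin N)} (hγ : IsClass B γ) (i j : γ) :
    Relation.ReflTransGen (fun i j : γ => i ≠ j ∧ subMat B γ i j ≠ 0) i j := by
  obtain ⟨i, hi⟩ := i
  obtain ⟨j, hj⟩ := j
  have h := class_access hγ hi hj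
  induction h using Relation.ReflTransGen.head_induction_on with
  | refl => exact Relation.ReflTransGen.refl
  | @head a c h h' ih =>
    have hc : c ∈ γ := class_mem hγ hi (Relation.ReflTransGen.single h)
      (Relation.ReflTransGen.trans h' (class_access hγ hj hi))
    have he : (fun i j : γ => i ≠ j ∧ subMat B γ i j ≠ 0) ⟨a, hi⟩ ⟨c, hc⟩ :=
      ⟨fun e => h.1 (congrArg Subtype.val e), h.2⟩
    exact Relation.ReflTransGen.head he (ih hc)

lemma subMat_metz {B : Matrix (Fin N) (Fin N) ℝ} (hB : Metz B) (γ : Set (Fin N)) :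
    Metz (subMat B γ) := fun i j h => hB i j (fun e => h (Subtype.ext e))

/-- Contribution from outside the class. -/
noncomputable def outSum (B : Matrix (Fin N) (Fin N) ℝ) (γ : Set (Fin N)) (u : Fin N → ℝ)
    (i : Fin N) : ℝ := ∑ j ∈ Finset.univ.filter (fun j => j ∉ γ), B i j * u j

lemma mulVec_class (B : Matrix (Fin N) (Fin N) ℝ) (γ : Set (Fin N)) (u : Fin N → ℝ) (i : γ) :
    (B *ᵥ u) i = (subMat B γ *ᵥ (fun a : γ => u a)) i + outSum B γ u i := by
  simp only [Matrix.mulVec, dotProduct, outSum, subMat]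
  rw [← Finset.sum_filter_add_sum_filter_not Finset.univ (fun j => j ∈ γ)]
  congr 1
  exact Finset.sum_subtype _ (by simp) (fun j => B i j * u j)

lemma outSum_nonneg {B : Matrix (Fin N) (Fin N) ℝ} (hB : Metz B) (γ : Set (Fin N))
    {u : Fin N → ℝ} (hu : ∀ i, 0 ≤ u i) (i : γ) : 0 ≤ outSum B γ u i := by
  refine Finset.sum_nonneg fun j hj => mul_nonneg (hB _ _ ?_) (hu j)
  rintro rfl
  simp at hj

lemma PP_sub {B : Matrix (Fin N) (Fin N) ℝ} (hB : Metz B) (γ : Set (Fin N)) {s : ℝ}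
    (h : PP B s) : PP (subMat B γ) s := by
  obtain ⟨u, hu, h⟩ := h
  refine ⟨fun a => u a, fun a => hu a, fun a => ?_⟩
  have h1 := h a
  rw [mulVec_class B γ] at h1
  have := outSum_nonneg hB γ (fun i => (hu i).le) a
  simp only
  linarith

/-- `u` solves the resolvent equation with right-hand side one. -/
def Sol (B : Matrix (Fin N) (Fin N) ℝ) (t : ℝ) (u : Fin N → ℝ) : Prop :=
  (∀ i, 0 ≤ u i) ∧ ∀ i, (specAbs B + t) * u i - (B *ᵥ u) i = 1

lemma basic_w {B : Matrix (Fin N) (Fin N) ℝ} (hB : Metz B) {γ : Set (Fin N)} (hγ : IsClass B γ)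
    (hb : IsBasic B γ) : ∃ w : γ → ℝ, (∀ i, 0 < w i) ∧ ∀ t u, Sol B t u →
      t * ∑ i : γ, w i * u i = ∑ i : γ, w i * (1 + outSum B γ u i) := by
  have := class_nonempty hγ
  obtain ⟨w, hw, hwM⟩ := exists_left_pos (subMat_metz hB γ) (class_irr hγ)
  rw [show specAbs (subMat B γ) = specAbs B from hb] at hwM
  refine ⟨w, hw, fun t u hu => ?_⟩
  have e : ∑ i, (w ᵥ* subMat B γ) i * u i = ∑ i, w i * (subMat B γ *ᵥ (fun a : γ => u a)) i :=
    (Matrix.dotProduct_mulVec w (subMat B γ) (fun a : γ => u a)).symm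
  have e2 : ∑ i : γ, w i * (1 + outSum B γ u i) = ∑ i : γ, (w i * ((specAbs B + t) * u i)
      - w i * (subMat B γ *ᵥ (fun a : γ => u a)) i) := by
    refine Finset.sum_congr rfl fun i _ => ?_
    have h1 := hu.2 i
    rw [mulVec_class B γ] at h1
    rw [← h1]; ring
  rw [e2, Finset.sum_sub_distrib, ← e, ← Finset.sum_sub_distrib, Finset.mul_sum]
  refine Finset.sum_congr rfl fun i _ => ?_
  rw [hwM]; ring

/-- One for basic classes and zero otherwise. -/
noncomputable def bas (B : Matrix (Fin N) (Fin N) ℝ) (γ : Set (Fin N)) : ℕ :=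
  if IsBasic B γ then 1 else 0

lemma class_upper {B : Matrix (Fin N) (Fin N) ℝ} (hB : Metz B) {γ : Set (Fin N)}
    (hγ : IsClass B γ) : ∃ C : ℝ, ∀ t u, 0 < t → Sol B t u → ∀ G, 0 ≤ G →
      (∀ i : γ, 1 + outSum B γ u i ≤ G) → ∀ i : γ, t ^ bas B γ * u i ≤ C * G := by
  have hne := class_nonempty hγ
  have : Nonempty (Fin N) := hne.map Subtype.val
  by_cases hb : IsBasic B γ
  · obtain ⟨w, hw, h⟩ := basic_w hB hγ hb
    refine ⟨∑ i, (∑ k, w k) / w i, fun t u ht hu G hG hout i => ?_⟩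
    simp only [bas, hb, if_true, pow_one]
    have h1 := h t u hu
    have h2 : ∑ i : γ, w i * (1 + outSum B γ u i) ≤ ∑ i : γ, w i * G :=
      Finset.sum_le_sum fun i _ => mul_le_mul_of_nonneg_left (hout i) (hw i).le
    rw [← Finset.sum_mul] at h2
    have h3 : w i * u i ≤ ∑ i : γ, w i * u i :=
      Finset.single_le_sum (f := fun i : γ => w i * u i)
        (fun i _ => mul_nonneg (hw i).le (hu.1 i)) (Finset.mem_univ i)
    have h4 := mul_le_mul_of_nonneg_left h3 ht.le
    have h5 : t * u i ≤ (∑ k, w k) / w i * G := by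
      rw [div_mul_eq_mul_div, le_div_iff₀ (hw i)]
      linarith
    refine h5.trans (mul_le_mul_of_nonneg_right ?_ hG)
    exact Finset.single_le_sum (f := fun i => (∑ k, w k) / w i)
      (fun i _ => div_nonneg (Finset.sum_nonneg fun k _ => (hw k).le) (hw i).le) (Finset.mem_univ i)
  · obtain ⟨hP, -⟩ := specAbs_spec hB
    obtain ⟨hPs, -⟩ := specAbs_spec (subMat_metz hB γ)
    have hlt : specAbs (subMat B γ) < specAbs B := by
      refine lt_of_le_of_ne ?_ hb
      refine le_of_forall_gt fun s hs => ?_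
      exact (hPs s).1 (PP_sub hB γ ((hP s).2 hs))
    obtain ⟨p, hp, hpM⟩ := (hPs _).2 hlt
    obtain ⟨k, hk⟩ := Finite.exists_min (fun i => specAbs B * p i - (subMat B γ *ᵥ p) i)
    set ε := specAbs B * p k - (subMat B γ *ᵥ p) k
    have hε : 0 < ε := sub_pos.2 (hpM k)
    refine ⟨∑ i, p i / ε, fun t u ht hu G hG hout i => ?_⟩
    simp only [bas, hb, if_false, pow_zero, one_mul]
    have hy := ((hPs (specAbs B + t)).2 (by linarith)).mono_vec (subMat_metz hB γ)
      (x := (G / ε) • p - (fun a : γ => u a)) (fun i => by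
        rw [Matrix.mulVec_sub, Matrix.mulVec_smul]
        simp only [Pi.sub_apply, Pi.smul_apply, smul_eq_mul]
        have h1 := hu.2 i
        rw [mulVec_class B γ] at h1
        have h2 := hout i
        have h3 := mul_le_mul_of_nonneg_left (hk i) (div_nonneg hG hε.le)
        rw [div_mul_cancel₀ _ hε.ne'] at h3
        have h4 : 0 ≤ G / ε * (t * p i) :=
          mul_nonneg (div_nonneg hG hε.le) (mul_nonneg ht.le (hp i).le)
        simp only [mul_sub] at h3 ⊢
        linarith) i
    simp only [Pi.sub_apply, Pi.smul_apply, smul_eq_mul] at hy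
    have h5 : u i ≤ p i / ε * G := by
      rw [div_mul_eq_mul_div] at hy ⊢
      rw [mul_comm (p i)]; linarith
    refine h5.trans (mul_le_mul_of_nonneg_right ?_ hG)
    exact Finset.single_le_sum (f := fun i => p i / ε)
      (fun i _ => div_nonneg (hp i).le hε.le) (Finset.mem_univ i)

lemma sol_compare {B : Matrix (Fin N) (Fin N) ℝ} (hB : Metz B) {i j : Fin N} (h : access B i j) :
    ∃ c > 0, ∀ t u, t ≤ 1 → Sol B t u → c * u j ≤ u i := by
  obtain ⟨c, hc, h⟩ := compare_access hB (specAbs B + 1) h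
  exact ⟨c, hc, fun t u ht hu => h (specAbs B + t) (by linarith) u hu.1
    (fun i => by have := hu.2 i; linarith)⟩

lemma sol_low {B : Matrix (Fin N) (Fin N) ℝ} (hB : Metz B) (i : Fin N) :
    ∃ c > 0, ∀ t u, t ≤ 1 → Sol B t u → c ≤ u i := by
  have hk : 0 < |specAbs B| + 1 + |B i i| := by positivity
  refine ⟨(|specAbs B| + 1 + |B i i|)⁻¹, by positivity, fun t u ht hu => ?_⟩
  rw [inv_le_iff_one_le_mul₀ hk]
  have h1 := hu.2 i
  rw [mulVec_split] at h1
  have h2 := offsum_nonneg hB hu.1 i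
  have h3 : specAbs B + t - B i i ≤ |specAbs B| + 1 + |B i i| := by
    have := le_abs_self (specAbs B)
    have := neg_abs_le (B i i)
    linarith
  have := mul_le_mul_of_nonneg_right h3 (hu.1 i)
  linarith

lemma basic_lower {B : Matrix (Fin N) (Fin N) ℝ} (hB : Metz B) {γ : Set (Fin N)}
    (hγ : IsClass B γ) (hb : IsBasic B γ) (i k : γ) : ∃ c > 0, ∀ t u, 0 < t → t ≤ 1 → Sol B t u →
      c * (1 + outSum B γ u k) ≤ t * u i := by
  obtain ⟨w, hw, h⟩ := basic_w hB hγ hb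
  choose c hc hcu using fun j : γ => sol_compare hB (class_access hγ i.2 j.2)
  set K := ∑ j : γ, w j * (c j)⁻¹ with hK
  have hKpos : 0 < K := Finset.sum_pos (fun j _ => mul_pos (hw j) (inv_pos.2 (hc j))) ⟨i, Finset.mem_univ i⟩
  refine ⟨w k / K, div_pos (hw k) hKpos, fun t u ht ht1 hu => ?_⟩
  have h1 := h t u hu
  have h2 : w k * (1 + outSum B γ u k) ≤ ∑ i : γ, w i * (1 + outSum B γ u i) :=
    Finset.single_le_sum (f := fun i : γ => w i * (1 + outSum B γ u i))
      (fun i _ => mul_nonneg (hw i).le (by have := outSum_nonneg hB γ hu.1 i; linarith))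
      (Finset.mem_univ k)
  have h3 : ∑ j : γ, w j * u j ≤ K * u i := by
    rw [hK, Finset.sum_mul]
    refine Finset.sum_le_sum fun j _ => ?_
    rw [mul_assoc]
    refine mul_le_mul_of_nonneg_left ?_ (hw j).le
    rw [le_inv_mul_iff₀ (hc j)]
    exact hcu j t u ht1 hu
  have h4 := mul_le_mul_of_nonneg_left h3 ht.le
  rw [div_mul_eq_mul_div, div_le_iff₀ hKpos]
  linarith

lemma class_lower_one {B : Matrix (Fin N) (Fin N) ℝ} (hB : Metz B) {γ : Set (Fin N)}
    (hγ : IsClass B γ) (i : γ) : ∃ c > 0, ∀ t u, 0 < t → t ≤ 1 → Sol B t u →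
      c ≤ t ^ bas B γ * u i := by
  by_cases hb : IsBasic B γ
  · obtain ⟨c, hc, h⟩ := basic_lower hB hγ hb i i
    refine ⟨c, hc, fun t u ht ht1 hu => ?_⟩
    simp only [bas, hb, if_true, pow_one]
    have := h t u ht ht1 hu
    have := mul_nonneg hc.le (outSum_nonneg hB γ hu.1 i)
    linarith
  · obtain ⟨c, hc, h⟩ := sol_low hB i
    refine ⟨c, hc, fun t u ht ht1 hu => ?_⟩
    simp only [bas, hb, if_false, pow_zero, one_mul]
    exact h t u ht1 hu

lemma exit_edge {B : Matrix (Fin N) (Fin N) ℝ} {γ : Set (Fin N)} {i n : Fin N}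
    (hi : i ∈ γ) (hn : n ∉ γ) (h : access B i n) :
    ∃ k ∈ γ, ∃ j, j ∉ γ ∧ edgeRel B k j ∧ access B j n := by
  induction h using Relation.ReflTransGen.head_induction_on with
  | refl => exact absurd hi hn
  | @head a c h h' ih =>
    by_cases hc : c ∈ γ
    · exact ih hc
    · exact ⟨a, hi, c, hc, h, h'⟩

lemma class_lower {B : Matrix (Fin N) (Fin N) ℝ} (hB : Metz B) {γ : Set (Fin N)}
    (hγ : IsClass B γ) (i : γ) {n : Fin N} (hn : n ∉ γ) (hin : access B i n) :
    ∃ c > 0, ∀ t u, 0 < t → t ≤ 1 → Sol B t u →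
      c * u n ≤ t ^ bas B γ * u i := by
  by_cases hb : IsBasic B γ
  · obtain ⟨k, hk, j, hj, hkj, hjn⟩ := exit_edge i.2 hn hin
    obtain ⟨c, hc, h⟩ := basic_lower hB hγ hb i ⟨k, hk⟩
    obtain ⟨c', hc', h'⟩ := sol_compare hB hjn
    have hkj0 : 0 < B k j := lt_of_le_of_ne (hB _ _ hkj.1) hkj.2.symm
    refine ⟨c * (B k j * c'), by positivity, fun t u ht ht1 hu => ?_⟩
    simp only [bas, hb, if_true, pow_one]
    refine le_trans ?_ (h t u ht ht1 hu)
    rw [mul_assoc]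
    refine mul_le_mul_of_nonneg_left ?_ hc.le
    have h1 : B k j * u j ≤ outSum B γ u k := by
      refine Finset.single_le_sum (f := fun j => B k j * u j) (fun l hl => mul_nonneg (hB _ _ ?_) (hu.1 l)) (by simpa using hj)
      rintro rfl
      simp [hk] at hl
    have h2 := mul_le_mul_of_nonneg_left (h' t u ht1 hu) hkj0.le
    simp only
    linarith
  · obtain ⟨c, hc, h⟩ := sol_compare hB hin
    refine ⟨c, hc, fun t u ht ht1 hu => ?_⟩
    simp only [bas, hb, if_false, pow_zero, one_mul]
    exact h t u ht1 hu

lemma chainLen_cons (B : Matrix (Fin N) (Fin N) ℝ) (γ : Set (Fin N)) (l : List (Set (Fin N))) :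
    chainLen B (γ :: l) = chainLen B l + bas B γ := by
  simp [chainLen, List.countP_cons, bas]

lemma class_disj {B : Matrix (Fin N) (Fin N) ℝ} {γ δ : Set (Fin N)} (hγ : IsClass B γ)
    (hδ : IsClass B δ) (hne : γ ≠ δ) {n : Fin N} (hn : n ∈ δ) : n ∉ γ := by
  intro hn'
  apply hne
  ext x
  constructor
  · intro hx
    exact class_mem hδ hn (class_access hγ hn' hx) (class_access hγ hx hn')
  · intro hx
    exact class_mem hγ hn' (class_access hδ hn hx) (class_access hδ hx hn)

lemma chain_lower {B : Matrix (Fin N) (Fin N) ℝ} (hB : Metz B) (l : List (Set (Fin N))) :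
    ∀ γ : Set (Fin N), IsClassChain B (γ :: l) → ∀ i : γ, ∃ c > 0, ∀ t u, 0 < t → t ≤ 1 → Sol B t u →
      c ≤ t ^ chainLen B (γ :: l) * u i := by
  induction l with
  | nil =>
    intro γ h i
    have := class_lower_one hB (h.1 γ (by simp)) i
    rw [chainLen_cons, show chainLen B [] = 0 from rfl, zero_add]
    exact this
  | cons δ l ih =>
    intro γ h i
    have hγ := h.1 γ (by simp)
    have hδ := h.1 δ (by simp)
    have h2 := List.isChain_cons_cons.1 h.2
    obtain ⟨⟨m, hm, n, hn, hmn⟩, hne⟩ := h2.1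
    have hnγ := class_disj hγ hδ hne hn
    obtain ⟨c, hc, hcu⟩ := class_lower hB hγ i hnγ ((class_access hγ i.2 hm).trans hmn)
    obtain ⟨c', hc', hcu'⟩ := ih δ ⟨fun g hg => h.1 g (List.mem_cons_of_mem _ hg), h2.2⟩ ⟨n, hn⟩
    refine ⟨c * c', by positivity, fun t u ht ht1 hu => ?_⟩
    rw [chainLen_cons, pow_add]
    have h3 := hcu t u ht ht1 hu
    have h4 := mul_le_mul_of_nonneg_left (hcu' t u ht ht1 hu) hc.le
    have h5 := mul_le_mul_of_nonneg_left h3 (pow_nonneg ht.le (chainLen B (δ :: l)))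
    simp only at h4
    linarith

/-- The class of a vertex. -/
def cls (B : Matrix (Fin N) (Fin N) ℝ) (i : Fin N) : Set (Fin N) :=
  {n' : Fin N | access B i n' ∧ access B n' i}

lemma mem_cls (B : Matrix (Fin N) (Fin N) ℝ) (i : Fin N) : i ∈ cls B i :=
  ⟨Relation.ReflTransGen.refl, Relation.ReflTransGen.refl⟩

lemma cls_isClass (B : Matrix (Fin N) (Fin N) ℝ) (i : Fin N) : IsClass B (cls B i) := ⟨i, rfl⟩

lemma strict_wf (B : Matrix (Fin N) (Fin N) ℝ) :
    WellFounded (fun j i => access B i j ∧ ¬ access B j i) := by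
  have h1 : IsTrans (Fin N) (fun j i => access B i j ∧ ¬ access B j i) :=
    ⟨fun a b c hab hbc => ⟨hbc.1.trans hab.1, fun h => hab.2 (h.trans hbc.1)⟩⟩
  have h2 : Std.Irrefl (fun j i => access B i j ∧ ¬ access B j i) :=
    ⟨fun a h => h.2 h.1⟩
  exact Finite.wellFounded_of_trans_of_irrefl _

lemma chain_upper {B : Matrix (Fin N) (Fin N) ℝ} (hB : Metz B) (i : Fin N) :
    ∃ l, IsClassChain B (cls B i :: l) ∧ ∃ C, ∀ t u, 0 < t → t ≤ 1 → Sol B t u →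
      t ^ chainLen B (cls B i :: l) * u i ≤ C := by
  induction i using (strict_wf B).induction with
  | _ i ih =>
  choose! l hl C hC using ih
  set γ := cls B i with hγdef
  have hγ : IsClass B γ := cls_isClass B i
  have hex : ∃ l', IsClassChain B (γ :: l') ∧ ∀ j, (access B i j ∧ ¬ access B j i) →
      chainLen B (cls B j :: l j) ≤ chainLen B l' := by
    by_cases hS : ∃ j, access B i j ∧ ¬ access B j i
    · have : Nonempty {j // access B i j ∧ ¬ access B j i} := by
        obtain ⟨j, hj⟩ := hS
        exact ⟨⟨j, hj⟩⟩
      obtain ⟨⟨k, hk⟩, hmax⟩ := Finite.exists_max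
        (fun j : {j // access B i j ∧ ¬ access B j i} => chainLen B (cls B j :: l j))
      refine ⟨cls B k :: l k, ⟨?_, ?_⟩, fun j hj => hmax ⟨j, hj⟩⟩
      · intro g hg
        rcases List.mem_cons.1 hg with rfl | hg
        · exact hγ
        · exact (hl k hk).1 g hg
      · refine List.isChain_cons_cons.2 ⟨⟨⟨i, mem_cls B i, k, mem_cls B k, hk.1⟩, ?_⟩, (hl k hk).2⟩
        intro e
        have : k ∈ γ := e ▸ mem_cls B k
        exact hk.2 this.2
    · refine ⟨[], ⟨by simpa using hγ, List.isChain_singleton _⟩, fun j hj => absurd ⟨j, hj⟩ hS⟩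
  obtain ⟨l', hl', hmax⟩ := hex
  refine ⟨l', hl', ?_⟩
  obtain ⟨D, hD⟩ := class_upper hB hγ
  set K := chainLen B l' with hK
  set E := 1 + ∑ k, ∑ j, |B k j * C j| with hE
  have hE0 : 0 ≤ E := by
    have : 0 ≤ ∑ k, ∑ j, |B k j * C j| :=
      Finset.sum_nonneg fun k _ => Finset.sum_nonneg fun j _ => abs_nonneg _
    linarith
  refine ⟨D * E, fun t u ht ht1 hu => ?_⟩
  have htK : 0 < t ^ K := pow_pos ht K
  have h1 := hD t u ht hu (E / t ^ K) (by positivity) (fun k => by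
    rw [le_div_iff₀ htK, add_mul, one_mul]
    have a1 : t ^ K ≤ 1 := pow_le_one₀ ht.le ht1
    have a2 : outSum B γ u k * t ^ K ≤ ∑ j, |B k j * C j| := by
      rw [outSum, Finset.sum_mul]
      refine le_trans (Finset.sum_le_sum (g := fun j => |B k j * C j|) fun j hj => ?_)
        (Finset.sum_le_sum_of_subset_of_nonneg (Finset.subset_univ _) fun j _ _ => abs_nonneg _)
      have hjγ : j ∉ γ := by simpa using hj
      have hkj : (k : Fin N) ≠ j := by
        rintro rfl
        exact hjγ k.2
      by_cases h0 : B k j = 0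
      · simp [h0]
      · have hij : access B i j := (class_access hγ (mem_cls B i) k.2).tail ⟨hkj, h0⟩
        have hs : access B i j ∧ ¬ access B j i := ⟨hij, fun h => hjγ ⟨hij, h⟩⟩
        have b1 := hC j hs t u ht ht1 hu
        have b2 : t ^ K ≤ t ^ chainLen B (cls B j :: l j) :=
          pow_le_pow_of_le_one ht.le ht1 (hmax j hs)
        have b3 := mul_le_mul_of_nonneg_right b2 (hu.1 j)
        have b4 := mul_le_mul_of_nonneg_left (b3.trans b1) (hB _ _ hkj)
        refine le_trans ?_ (le_abs_self _)
        linarith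
    have a3 : ∑ j, |B k j * C j| ≤ ∑ k, ∑ j, |B k j * C j| :=
      Finset.single_le_sum (f := fun k => ∑ j, |B k j * C j|)
        (fun k _ => Finset.sum_nonneg fun j _ => abs_nonneg _) (Finset.mem_univ (k : Fin N))
    linarith) ⟨i, mem_cls B i⟩
  rw [chainLen_cons, pow_add, mul_assoc]
  rw [← mul_div_assoc, le_div_iff₀ htK] at h1
  linarith

lemma index_growth {A : Matrix (Fin N) (Fin N) ℝ} {d : ℕ}
    (hker : LinearMap.ker ((A ^ d).mulVecLin) = LinearMap.ker ((A ^ (d + 1)).mulVecLin)) :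
    ∃ ε > 0, ∃ C, ∀ t u, 0 < t → t ≤ 1 → t < ε → t • u - A *ᵥ u = (1 : Fin N → ℝ) →
      ∀ i, t ^ d * u i ≤ C := by
  set W := LinearMap.range (A ^ d).mulVecLin
  have hk : LinearMap.ker (A.mulVecLin.domRestrict W) = ⊥ := by
    rw [LinearMap.ker_eq_bot']
    rintro ⟨_, x, rfl⟩ h
    simp only [LinearMap.domRestrict_apply, Matrix.mulVecLin_apply, Matrix.mulVec_mulVec, ← pow_succ'] at h
    have hx : x ∈ LinearMap.ker ((A ^ (d + 1)).mulVecLin) := by simpa using h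
    rw [← hker] at hx
    ext1
    simpa using hx
  obtain ⟨K, hK, hKa⟩ := LinearMap.exists_antilipschitzWith _ hk
  have hanti : ∀ x, ‖(A ^ d) *ᵥ x‖ ≤ K * ‖A *ᵥ ((A ^ d) *ᵥ x)‖ := by
    intro x
    have := hKa.le_mul_norm_sub ⟨(A ^ d) *ᵥ x, ⟨x, rfl⟩⟩ 0
    simpa using this
  have hK' : (0 : ℝ) < K := hK
  have hstep : ∀ m, ∃ C, ∀ (t : ℝ) (u : Fin N → ℝ), 0 < t → t ≤ 1 → t • u - A *ᵥ u = (1 : Fin N → ℝ) →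
      ‖t ^ m • u‖ ≤ C + ‖(A ^ m) *ᵥ u‖ := by
    intro m
    induction m with
    | zero => exact ⟨0, fun t u _ _ _ => by simp⟩
    | succ m ih =>
      obtain ⟨C, hC⟩ := ih
      refine ⟨|C| + ‖(A ^ m) *ᵥ (1 : Fin N → ℝ)‖, fun t u ht ht1 hu => ?_⟩
      have h1 := hC t u ht ht1 hu
      have h2 : t • ((A ^ m) *ᵥ u) = (A ^ m) *ᵥ (1 : Fin N → ℝ) + (A ^ (m + 1)) *ᵥ u := by
        rw [← hu, Matrix.mulVec_sub, Matrix.mulVec_smul, Matrix.mulVec_mulVec, ← pow_succ]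
        abel
      have h3 : t * ‖(A ^ m) *ᵥ u‖ ≤ ‖(A ^ m) *ᵥ (1 : Fin N → ℝ)‖ + ‖(A ^ (m + 1)) *ᵥ u‖ := by
        have := norm_add_le ((A ^ m) *ᵥ (1 : Fin N → ℝ)) ((A ^ (m + 1)) *ᵥ u)
        rw [← h2, norm_smul, Real.norm_of_nonneg ht.le] at this
        exact this
      have h4 : ‖t ^ (m + 1) • u‖ = t * ‖t ^ m • u‖ := by
        rw [pow_succ', mul_smul, norm_smul, Real.norm_of_nonneg ht.le]
      rw [h4]
      have h5 := mul_le_mul_of_nonneg_left h1 ht.le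
      have h6 : t * C ≤ |C| := by
        have := mul_le_mul_of_nonneg_left (le_abs_self C) ht.le
        have := mul_le_mul_of_nonneg_right ht1 (abs_nonneg C)
        linarith
      linarith
  obtain ⟨C, hC⟩ := hstep d
  refine ⟨1 / (2 * K), by positivity, C + 2 * K * ‖(A ^ d) *ᵥ (1 : Fin N → ℝ)‖, ?_⟩
  intro t u ht ht1 hte hu i
  have h1 := hC t u ht ht1 hu
  have h2 : A *ᵥ ((A ^ d) *ᵥ u) = t • ((A ^ d) *ᵥ u) - (A ^ d) *ᵥ (1 : Fin N → ℝ) := by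
    rw [← hu, Matrix.mulVec_sub, Matrix.mulVec_smul, Matrix.mulVec_mulVec, Matrix.mulVec_mulVec,
      ← pow_succ, ← pow_succ']
    abel
  have h3 := hanti u
  rw [h2] at h3
  have h4 := norm_sub_le (t • ((A ^ d) *ᵥ u)) ((A ^ d) *ᵥ (1 : Fin N → ℝ))
  rw [norm_smul, Real.norm_of_nonneg ht.le] at h4
  have h5 := mul_le_mul_of_nonneg_left h4 hK'.le
  have h6 : K * t ≤ 1 / 2 := by
    rw [lt_div_iff₀ (by positivity)] at hte
    linarith
  have h7 := mul_le_mul_of_nonneg_right h6 (norm_nonneg ((A ^ d) *ᵥ u))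
  have h8 : t ^ d * u i ≤ ‖t ^ d • u‖ := by
    have := norm_le_pi_norm (t ^ d • u) i
    exact (le_abs_self _).trans this
  linarith

/-- Partial Laurent numerators. -/
noncomputable def yy (A : Matrix (Fin N) (Fin N) ℝ) (x : Fin N → ℝ) (t : ℝ) : ℕ → (Fin N → ℝ)
  | 0 => x
  | (m + 1) => t • yy A x t m + (A ^ (m + 1)) *ᵥ x

lemma yy_eq (A : Matrix (Fin N) (Fin N) ℝ) (x : Fin N → ℝ) (t : ℝ) (m : ℕ) :
    t • yy A x t m - A *ᵥ yy A x t m = t ^ (m + 1) • x - (A ^ (m + 1)) *ᵥ x := by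
  induction m with
  | zero => simp [yy]
  | succ m ih =>
    rw [yy, Matrix.mulVec_add, Matrix.mulVec_smul, Matrix.mulVec_mulVec, ← pow_succ', smul_add]
    have : t • t • yy A x t m - t • A *ᵥ yy A x t m = t • (t ^ (m + 1) • x - (A ^ (m + 1)) *ᵥ x) := by
      rw [← ih, smul_sub]
    rw [smul_sub, smul_smul t (t ^ (m + 1)), ← pow_succ'] at this
    calc _ = (t • t • yy A x t m - t • A *ᵥ yy A x t m) + t • (A ^ (m + 1)) *ᵥ x
          - A ^ (m + 1 + 1) *ᵥ x := by abel
      _ = _ := by rw [this]; abel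

lemma yy_cont (A : Matrix (Fin N) (Fin N) ℝ) (x : Fin N → ℝ) (m : ℕ) :
    Continuous fun t => yy A x t m := by
  induction m with
  | zero => simp only [yy]; fun_prop
  | succ m ih => simp only [yy]; fun_prop

lemma yy_zero (A : Matrix (Fin N) (Fin N) ℝ) (x : Fin N → ℝ) (m : ℕ) :
    yy A x 0 m = (A ^ m) *ᵥ x := by
  cases m <;> simp [yy]

lemma growth_index {B : Matrix (Fin N) (Fin N) ℝ} (hB : Metz B) (hN : 0 < N) {L : ℕ} {C : ℝ}
    (hC : ∀ t u, 0 < t → t ≤ 1 → Sol B t u → ∀ i, t ^ L * u i ≤ C) (x : Fin N → ℝ)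
    (hx : ((B - specAbs B • 1) ^ (L + 1)) *ᵥ x = 0) :
    ((B - specAbs B • 1) ^ L) *ᵥ x = 0 := by
  have : Nonempty (Fin N) := ⟨⟨0, hN⟩⟩
  obtain ⟨hP, -⟩ := specAbs_spec hB
  set A := B - specAbs B • (1 : Matrix (Fin N) (Fin N) ℝ) with hA
  set X := ∑ i, |x i|
  have hX : ∀ i, |x i| ≤ X := fun i => Finset.single_le_sum (f := fun i => |x i|)
    (fun i _ => abs_nonneg _) (Finset.mem_univ i)
  have hX0 : 0 ≤ X := Finset.sum_nonneg fun i _ => abs_nonneg _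
  have hbound : ∀ t, 0 < t → t ≤ 1 → ∀ i, |yy A x t L i| ≤ t * (X * C) := by
    intro t ht ht1 i
    have hPt := (hP (specAbs B + t)).2 (by linarith)
    obtain ⟨u, hu⟩ := hPt.sol hB
    have hy : ∀ i, (specAbs B + t) * yy A x t L i - (B *ᵥ yy A x t L) i = t ^ (L + 1) * x i := by
      intro i
      have := congrFun (yy_eq A x t L) i
      rw [hx, hA, Matrix.sub_mulVec, Matrix.smul_mulVec, Matrix.one_mulVec] at this
      simp at this
      rw [← this]; ring
    have htp : 0 < t ^ (L + 1) := pow_pos ht _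
    have h1 := hPt.mono_vec hB (x := (t ^ (L + 1) * X) • u + yy A x t L) (fun i => by
      rw [Matrix.mulVec_add, Matrix.mulVec_smul]
      simp only [Pi.add_apply, Pi.smul_apply, smul_eq_mul]
      have a1 := hy i
      have a2 := congrArg (fun r => (t ^ (L + 1) * X) * r) (hu.2 i)
      have a3 := mul_le_mul_of_nonneg_left ((neg_le_abs (x i)).trans (hX i)) htp.le
      simp only [mul_sub, mul_one] at a2
      simp only [mul_add]
      linarith) i
    have h2 := hPt.mono_vec hB (x := (t ^ (L + 1) * X) • u - yy A x t L) (fun i => by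
      rw [Matrix.mulVec_sub, Matrix.mulVec_smul]
      simp only [Pi.sub_apply, Pi.smul_apply, smul_eq_mul]
      have a1 := hy i
      have a2 := congrArg (fun r => (t ^ (L + 1) * X) * r) (hu.2 i)
      have a3 := mul_le_mul_of_nonneg_left ((le_abs_self (x i)).trans (hX i)) htp.le
      simp only [mul_sub, mul_one] at a2
      simp only [mul_sub]
      linarith) i
    simp only [Pi.add_apply, Pi.sub_apply, Pi.smul_apply, smul_eq_mul] at h1 h2
    have h3 := mul_le_mul_of_nonneg_left (hC t u ht ht1 hu i) (mul_nonneg ht.le hX0)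
    have h4 : t ^ (L + 1) * X * u i = t * X * (t ^ L * u i) := by ring
    rw [h4] at h1 h2
    rw [abs_le]
    constructor <;> linarith
  ext i
  have hc : Continuous fun t => |yy A x t L i| :=
    ((continuous_apply i).comp (yy_cont A x L)).abs
  have hc2 : Continuous fun t : ℝ => t * (X * C) := by fun_prop
  have := le_of_tendsto_of_tendsto (b := nhdsWithin (0 : ℝ) (Set.Ioi 0))
    ((hc.continuousAt (x := 0)).tendsto.mono_left nhdsWithin_le_nhds)
    ((hc2.continuousAt (x := 0)).tendsto.mono_left nhdsWithin_le_nhds) (by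
      filter_upwards [Ioc_mem_nhdsGT (zero_lt_one' ℝ)] with t ht
      exact hbound t ht.1 ht.2 i)
  rw [yy_zero] at this
  simpa using this

/-- **Rothblum index theorem.**  For a Metzler matrix `B`, the spectral abscissa `ζ(B)`
is an eigenvalue of `B` whose index (the smallest `d` with
`ker((B−ζ(B)I)^d) = ker((B−ζ(B)I)^{d+1})`) equals the length of the longest chain of
classes of `B`. -/
theorem rothblum_index_theorem (hN : 0 < N)
    (B : Matrix (Fin N) (Fin N) ℝ)
    (hMetzler : ∀ i j, i ≠ j → 0 ≤ B i j)
    (d : ℕ)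
    (hker : LinearMap.ker (((B - specAbs B • 1) ^ d).mulVecLin)
      = LinearMap.ker (((B - specAbs B • 1) ^ (d + 1)).mulVecLin))
    (hmin : ∀ k < d, LinearMap.ker (((B - specAbs B • 1) ^ k).mulVecLin)
      ≠ LinearMap.ker (((B - specAbs B • 1) ^ (k + 1)).mulVecLin)) :
    specAbs B ∈ spectrum ℝ B ∧
    IsGreatest {L : ℕ | ∃ l : List (Set (Fin N)), IsClassChain B l ∧ chainLen B l = L} d := by
  have hB : Metz B := hMetzler
  have hne : Nonempty (Fin N) := ⟨⟨0, hN⟩⟩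
  obtain ⟨hP, hdet⟩ := specAbs_spec hB
  refine ⟨?_, ?_⟩
  · rw [spectrum.mem_iff, Matrix.isUnit_iff_isUnit_det, isUnit_iff_ne_zero, not_not,
      Algebra.algebraMap_eq_smul_one]
    exact hdet
  have hsolA : ∀ t u, Sol B t u →
      t • u - (B - specAbs B • (1 : Matrix (Fin N) (Fin N) ℝ)) *ᵥ u = (1 : Fin N → ℝ) := by
    intro t u hu
    ext i
    have := hu.2 i
    rw [Matrix.sub_mulVec, Matrix.smul_mulVec, Matrix.one_mulVec]
    simp
    linarith
  have hlow : ∀ l, IsClassChain B l → chainLen B l ≤ d := by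
    intro l hl
    cases l with
    | nil => simp [chainLen]
    | cons γ l =>
      obtain ⟨i⟩ := class_nonempty (hl.1 γ (by simp))
      obtain ⟨c, hc, hcu⟩ := chain_lower hB l γ hl i
      obtain ⟨ε, hε, C, hC⟩ := index_growth hker
      by_contra hlt
      push Not at hlt
      have key : ∀ t, 0 < t → t ≤ 1 → t < ε → c ≤ t * C := by
        intro t ht ht1 hte
        obtain ⟨u, hu⟩ := ((hP (specAbs B + t)).2 (by linarith)).sol hB
        have h1 := hcu t u ht ht1 hu
        have h2 := hC t u ht ht1 hte (hsolA t u hu) i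
        have h3 : t ^ chainLen B (γ :: l) ≤ t ^ (d + 1) := pow_le_pow_of_le_one ht.le ht1 hlt
        have h4 := mul_le_mul_of_nonneg_right h3 (hu.1 i)
        have h5 := mul_le_mul_of_nonneg_left h2 ht.le
        rw [pow_succ'] at h4
        linarith
      have hc2 : Continuous fun t : ℝ => t * C := by fun_prop
      have := ge_of_tendsto ((hc2.continuousAt (x := 0)).tendsto.mono_left
        (nhdsWithin_le_nhds (s := Set.Ioi 0))) (b := c) (by
          filter_upwards [Ioo_mem_nhdsGT (lt_min one_pos hε)] with t ht
          exact key t ht.1 (ht.2.le.trans (min_le_left _ _)) (ht.2.trans_le (min_le_right _ _)))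
      simp at this
      linarith
  have hup : ∃ l, IsClassChain B l ∧ d ≤ chainLen B l := by
    choose l hl C hC using chain_upper hB
    obtain ⟨k, hk⟩ := Finite.exists_max (fun i => chainLen B (cls B i :: l i))
    refine ⟨_, hl k, ?_⟩
    by_contra hlt
    push Not at hlt
    refine hmin _ hlt (le_antisymm ?_ ?_)
    · intro x hx
      simp only [LinearMap.mem_ker, Matrix.mulVecLin_apply] at hx ⊢
      rw [pow_succ', ← Matrix.mulVec_mulVec, hx, Matrix.mulVec_zero]
    · intro x hx
      simp only [LinearMap.mem_ker, Matrix.mulVecLin_apply] at hx ⊢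
      refine growth_index hB hN (C := ∑ i, |C i|) (fun t u ht ht1 hu i => ?_) x hx
      have h1 := hC i t u ht ht1 hu
      have h2 := mul_le_mul_of_nonneg_right (pow_le_pow_of_le_one ht.le ht1 (hk i)) (hu.1 i)
      have h3 : |C i| ≤ ∑ i, |C i| := Finset.single_le_sum (f := fun i => |C i|)
        (fun i _ => abs_nonneg _) (Finset.mem_univ i)
      have := le_abs_self (C i)
      linarith
  constructor
  · obtain ⟨l, hl, hd⟩ := hup
    exact ⟨l, hl, le_antisymm (hlow l hl) hd⟩
  · rintro _ ⟨l, hl, rfl⟩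
    exact hlow l hl
end

section
/- (Nussbaum convexity) Let C ⊆ ℝ be a nonempty convex set, and let F, G : C → ℝ^{N×N} with F(s) entrywise nonnegative for each s, each entry of F either log-convex or identically zero, G(s) diagonal for each s, and each diagonal entry of G convex. Then s ↦ ζ(F(s) + G(s)) is a convex function on C, where ζ denotes the spectral abscissa. -/
open Matrix

lemma nc_upper {N : ℕ} (A : Matrix (Fin N) (Fin N) ℝ) (hA : ∀ i j, i ≠ j → 0 ≤ A i j)
    (x : Fin N → ℝ) (l : ℝ) (h : ∀ i, ∑ j, A i j * Real.exp (x j - x i) ≤ l)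
    (μ : ℂ) (hμ : μ ∈ spectrum ℂ (A.map (algebraMap ℝ ℂ))) : μ.re ≤ l := by
  rw [← Matrix.spectrum_toLin', ← Module.End.hasEigenvalue_iff_mem_spectrum] at hμ
  obtain ⟨y, hy⟩ := hμ.exists_hasEigenvector
  have hy0 : y ≠ 0 := hy.2
  have hye := hy.apply_eq_smul
  rw [Matrix.toLin'_apply] at hye
  obtain ⟨k, hk⟩ := Function.ne_iff.mp hy0
  have : Nonempty (Fin N) := ⟨k⟩
  obtain ⟨i, hi⟩ := Finite.exists_max (fun i => ‖y i‖ * Real.exp (-x i))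
  have hk0 : 0 < ‖y k‖ * Real.exp (-x k) := by
    have : 0 < ‖y k‖ := norm_pos_iff.mpr hk
    positivity
  have hi0 : 0 < ‖y i‖ := by
    have := hk0.trans_le (hi k)
    exact pos_of_mul_pos_left this (Real.exp_pos _).le
  have hj : ∀ j, ‖y j‖ ≤ ‖y i‖ * Real.exp (x j - x i) := by
    intro j
    have := mul_le_mul_of_nonneg_right (hi j) (Real.exp_pos (x j)).le
    simp only [mul_assoc, ← Real.exp_add] at this
    have e1 : -x j + x j = 0 := by ring
    have e2 : -x i + x j = x j - x i := by ring
    rwa [e1, e2, Real.exp_zero, mul_one] at this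
  have e := congrFun hye i
  simp only [Matrix.mulVec, dotProduct, Matrix.map_apply, Pi.smul_apply, smul_eq_mul] at e
  rw [← Finset.add_sum_erase _ _ (Finset.mem_univ i)] at e
  have e2 : (μ - (A i i : ℂ)) * y i
      = ∑ j ∈ Finset.univ.erase i, (algebraMap ℝ ℂ (A i j)) * y j := by
    rw [sub_mul, ← e]; simp
  have e3 : ‖μ - (A i i : ℂ)‖ * ‖y i‖ ≤ (l - A i i) * ‖y i‖ := by
    rw [← norm_mul, e2]
    refine (norm_sum_le _ _).trans ?_
    have h1 := h i
    rw [← Finset.add_sum_erase _ _ (Finset.mem_univ i)] at h1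
    simp only [sub_self, Real.exp_zero, mul_one] at h1
    have h2 : ∑ j ∈ Finset.univ.erase i, A i j * Real.exp (x j - x i) ≤ l - A i i := by linarith
    refine le_trans ?_ (mul_le_mul_of_nonneg_right h2 hi0.le)
    rw [Finset.sum_mul]
    refine Finset.sum_le_sum fun j hjm => ?_
    have hne : i ≠ j := (Finset.ne_of_mem_erase hjm).symm
    have := mul_le_mul_of_nonneg_left (hj j) (hA i j hne)
    rw [norm_mul]
    have e4 : ‖algebraMap ℝ ℂ (A i j)‖ = A i j := by
      simp [abs_of_nonneg (hA i j hne)]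
    rw [e4]
    linarith
  have e5 := le_of_mul_le_mul_right e3 hi0
  have e6 := Complex.re_le_norm (μ - (A i i : ℂ))
  simp at e6
  linarith

lemma nc_bdd {N : ℕ} (A : Matrix (Fin N) (Fin N) ℝ) :
    BddAbove (Complex.re '' spectrum ℂ (A.map (algebraMap ℝ ℂ))) :=
  ((Matrix.finite_spectrum _).image _).bddAbove

lemma nc_det {N : ℕ} (A : Matrix (Fin N) (Fin N) ℝ) (l : ℝ) (hl : specAbs A < l) :
    (Matrix.scalar (Fin N) l - A).det ≠ 0 := by
  intro h0
  have hm : (l : ℂ) ∈ spectrum ℂ (A.map (algebraMap ℝ ℂ)) := by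
    rw [spectrum.mem_iff]
    intro hu
    rw [Matrix.isUnit_iff_isUnit_det] at hu
    have : (algebraMap ℂ (Matrix (Fin N) (Fin N) ℂ) (l : ℂ) - A.map (algebraMap ℝ ℂ))
        = (algebraMap ℝ ℂ).mapMatrix (Matrix.scalar (Fin N) l - A) := by
      ext i j
      by_cases hij : i = j
      · subst hij; simp [Matrix.algebraMap_matrix_apply]
      · simp [Matrix.algebraMap_matrix_apply, hij]
    rw [this, ← RingHom.map_det, h0] at hu
    simp at hu
  have := le_csSup (nc_bdd A) (Set.mem_image_of_mem Complex.re hm)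
  simp only [Complex.ofReal_re] at this
  exact absurd hl (not_lt.mpr this)

noncomputable def ncV {N : ℕ} (A : Matrix (Fin N) (Fin N) ℝ) (l : ℝ) : Fin N → ℝ :=
  (Matrix.scalar (Fin N) l - A)⁻¹ *ᵥ (fun _ => 1)

lemma ncV_eq {N : ℕ} (A : Matrix (Fin N) (Fin N) ℝ) (l : ℝ) (hl : specAbs A < l) (i : Fin N) :
    ∑ j, A i j * ncV A l j = l * ncV A l i - 1 := by
  have h : (Matrix.scalar (Fin N) l - A) *ᵥ ncV A l = fun _ => 1 := by
    rw [ncV, Matrix.mulVec_mulVec, Matrix.mul_nonsing_inv _ (nc_det A l hl).isUnit,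
      Matrix.one_mulVec]
  have := congrFun h i
  rw [Matrix.sub_mulVec] at this
  simp [Matrix.mulVec, dotProduct, Matrix.diagonal_apply] at this
  linarith

lemma ncV_cont {N : ℕ} (A : Matrix (Fin N) (Fin N) ℝ) :
    ContinuousOn (ncV A) (Set.Ioi (specAbs A)) := by
  have hM : Continuous (fun l : ℝ => Matrix.scalar (Fin N) l - A) := by
    refine Continuous.sub ?_ continuous_const
    refine Continuous.matrix_diagonal ?_
    exact continuous_pi fun _ => continuous_id
  have : ncV A = fun l => ((Matrix.scalar (Fin N) l - A).det)⁻¹ •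
      ((Matrix.scalar (Fin N) l - A).adjugate *ᵥ (fun _ => (1:ℝ))) := by
    funext l
    rw [ncV, Matrix.inv_def, Ring.inverse_eq_inv', Matrix.smul_mulVec]
  rw [this]
  refine ContinuousOn.smul (ContinuousOn.inv₀ hM.matrix_det.continuousOn ?_) ?_
  · intro l hl; exact nc_det A l hl
  · exact (hM.matrix_adjugate.matrix_mulVec continuous_const).continuousOn

lemma ncV_pos {N : ℕ} (A : Matrix (Fin N) (Fin N) ℝ) (hA : ∀ i j, i ≠ j → 0 ≤ A i j)
    (l : ℝ) (hl : specAbs A < l) (i : Fin N) : 0 < ncV A l i := by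
  have : Nonempty (Fin N) := ⟨i⟩
  set P : Set (Fin N → ℝ) := {v | ∀ i, 0 < v i} with hP
  have hPo : IsOpen P := by
    have : P = ⋂ i, {v : Fin N → ℝ | 0 < v i} := by ext; simp [hP]
    rw [this]
    exact isOpen_iInter_of_finite fun i => isOpen_lt continuous_const (continuous_apply i)
  have hsub : Set.Ioi (specAbs A) ⊆ Set.Ioi (specAbs A) ∩ ncV A ⁻¹' P := by
    refine isPreconnected_Ioi.subset_of_closure_inter_subset
      ((ncV_cont A).isOpen_inter_preimage isOpen_Ioi hPo) ?_ ?_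
    · obtain ⟨m, hm⟩ := Finite.exists_max (fun i => ∑ j, A i j)
      refine ⟨max (specAbs A + 1) (∑ j, A m j), ?_⟩
      have h1 : specAbs A < max (specAbs A + 1) (∑ j, A m j) :=
        lt_of_lt_of_le (by linarith) (le_max_left _ _)
      have h2 := le_max_right (specAbs A + 1) (∑ j, A m j)
      set L := max (specAbs A + 1) (∑ j, A m j)
      refine ⟨h1, h1, ?_⟩
      obtain ⟨k, hk⟩ := Finite.exists_min (ncV A L)
      have hk0 : 0 < ncV A L k := by
        by_contra hneg
        push Not at hneg
        have e := ncV_eq A L h1 k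
        have e2 : (∑ j, A k j) * ncV A L k ≤ ∑ j, A k j * ncV A L j := by
          rw [Finset.sum_mul]
          refine Finset.sum_le_sum fun j _ => ?_
          by_cases hj : k = j
          · subst hj; exact le_rfl
          · exact mul_le_mul_of_nonneg_left (hk j) (hA k j hj)
        have e3 : ∑ j, A k j ≤ L := (hm k).trans h2
        nlinarith
      intro j
      exact hk0.trans_le (hk j)
    · rintro x ⟨hx, hxs⟩
      refine ⟨hxs, ?_⟩
      have hc : ContinuousAt (ncV A) x := (ncV_cont A).continuousAt (Ioi_mem_nhds hxs)
      have hnn : ∀ j, 0 ≤ ncV A x j := by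
        intro j
        by_contra hneg
        push Not at hneg
        have hcj : ContinuousAt (fun y => ncV A y j) x :=
          (continuous_apply j).continuousAt.comp hc
        have hev := hcj.eventually_lt_const hneg
        obtain ⟨y, hy1, hy2⟩ := ((mem_closure_iff_frequently.mp hx).and_eventually hev).exists
        exact absurd hy2 (not_lt.mpr (hy1.2 j).le)
      intro j
      refine lt_of_le_of_ne (hnn j) fun h0 => ?_
      have e := ncV_eq A x hxs j
      rw [← h0] at e
      have : 0 ≤ ∑ k, A j k * ncV A x k := by
        refine Finset.sum_nonneg fun k _ => ?_
        by_cases hj : j = k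
        · subst hj; rw [← h0]; simp
        · exact mul_nonneg (hA j k hj) (hnn k)
      linarith
  exact (hsub hl).2 i

lemma nc_lower {N : ℕ} (A : Matrix (Fin N) (Fin N) ℝ) (hA : ∀ i j, i ≠ j → 0 ≤ A i j)
    (l : ℝ) (hl : specAbs A < l) :
    ∃ x : Fin N → ℝ, ∀ i, ∑ j, A i j * Real.exp (x j - x i) ≤ l := by
  refine ⟨fun i => Real.log (ncV A l i), fun i => ?_⟩
  have hp := ncV_pos A hA l hl
  have e := ncV_eq A l hl i
  simp only [Real.exp_sub, Real.exp_log (hp _)]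
  simp only [← mul_div_assoc]
  rw [← Finset.sum_div, div_le_iff₀ (hp i)]
  linarith

theorem nussbaum_convexity {N : ℕ} (C : Set ℝ) (hC : C.Nonempty) (hconv : Convex ℝ C)
    (F G : ℝ → Matrix (Fin N) (Fin N) ℝ)
    (hFnonneg : ∀ s ∈ C, ∀ i j, 0 ≤ F s i j)
    (hFentries : ∀ i j,
      ((∀ s ∈ C, 0 < F s i j) ∧ ConvexOn ℝ C (fun s => Real.log (F s i j))) ∨
      (∀ s ∈ C, F s i j = 0))
    (hGdiag : ∀ s ∈ C, ∀ i j, i ≠ j → G s i j = 0)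
    (hGconv : ∀ i, ConvexOn ℝ C (fun s => G s i i)) :
    ConvexOn ℝ C (fun s => specAbs (F s + G s)) := by
  have hM : ∀ s ∈ C, ∀ i j, i ≠ j → 0 ≤ (F s + G s) i j := by
    intro s hs i j hij
    rw [Matrix.add_apply, hGdiag s hs i j hij, add_zero]
    exact hFnonneg s hs i j
  have hsplit : ∀ s ∈ C, ∀ (x : Fin N → ℝ) i, ∑ j, (F s + G s) i j * Real.exp (x j - x i)
      = ∑ j, F s i j * Real.exp (x j - x i) + G s i i := by
    intro s hs x i
    simp only [Matrix.add_apply, add_mul, Finset.sum_add_distrib]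
    congr 1
    rw [Finset.sum_eq_single i]
    · simp
    · intro j _ hj; rw [hGdiag s hs i j hj.symm, zero_mul]
    · simp
  refine ⟨hconv, ?_⟩
  intro s hs t ht a b ha hb hab
  have hp : a • s + b • t ∈ C := hconv hs ht ha hb hab
  simp only [smul_eq_mul] at hp ⊢
  rcases Nat.eq_zero_or_pos N with hN | hN
  · subst hN
    simp [specAbs, spectrum.of_subsingleton]
  have : Nonempty (Fin N) := ⟨⟨0, hN⟩⟩
  refine le_of_forall_pos_le_add fun ε hε => ?_
  obtain ⟨x, hx⟩ := nc_lower (F s + G s) (hM s hs) (specAbs (F s + G s) + ε) (by linarith)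
  obtain ⟨y, hy⟩ := nc_lower (F t + G t) (hM t ht) (specAbs (F t + G t) + ε) (by linarith)
  have hne : (Complex.re '' spectrum ℂ
      ((F (a * s + b * t) + G (a * s + b * t)).map (algebraMap ℝ ℂ))).Nonempty :=
    (spectrum.nonempty_of_isAlgClosed_of_finiteDimensional ℂ _).image _
  refine csSup_le hne ?_
  rintro _ ⟨μ, hμ, rfl⟩
  refine nc_upper _ (hM _ hp) (fun i => a * x i + b * y i) _ ?_ μ hμ
  intro i
  rw [hsplit _ hp]
  have h1 := hx i
  have h2 := hy i
  rw [hsplit _ hs] at h1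
  rw [hsplit _ ht] at h2
  have hg := (hGconv i).2 hs ht ha hb hab
  simp only [smul_eq_mul] at hg
  have key : ∑ j, F (a * s + b * t) i j *
        Real.exp ((a * x j + b * y j) - (a * x i + b * y i))
      ≤ a * ∑ j, F s i j * Real.exp (x j - x i) + b * ∑ j, F t i j * Real.exp (y j - y i) := by
    rw [Finset.mul_sum, Finset.mul_sum, ← Finset.sum_add_distrib]
    refine Finset.sum_le_sum fun j _ => ?_
    rcases hFentries i j with ⟨hpos, hlc⟩ | hz
    · have hl := hlc.2 hs ht ha hb hab
      simp only [smul_eq_mul] at hl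
      have ee : ∀ r ∈ C, ∀ z, F r i j * Real.exp z = Real.exp (Real.log (F r i j) + z) := by
        intro r hr z
        rw [Real.exp_add, Real.exp_log (hpos r hr)]
      rw [ee _ hp, ee _ hs, ee _ ht]
      have hc := convexOn_exp.2 (Set.mem_univ (Real.log (F s i j) + (x j - x i)))
        (Set.mem_univ (Real.log (F t i j) + (y j - y i))) ha hb hab
      simp only [smul_eq_mul] at hc
      refine le_trans (Real.exp_le_exp.mpr ?_) hc
      linarith
    · rw [hz _ hp, hz _ hs, hz _ ht]; simp
  have h1' := mul_le_mul_of_nonneg_left h1 ha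
  have h2' := mul_le_mul_of_nonneg_left h2 hb
  have : a * ε + b * ε = ε := by rw [← add_mul, hab, one_mul]
  linarith
end
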